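/- Let G be a finite group and p a prime divisor of |G| with gcd(|G|, p−1) = 1. Then G is p-nilpotent if and only if G has a soluble normal subgroup H such that G/H is p-nilpotent and every maximal subgroup of every Sylow subgroup of the Fitting subgroup F(H) is 𝔘ₛ-quasinormal in G. -/

import Mathlib

open scoped Pointwise

universe u

/-- `M` is a maximal subgroup of `K` (within the subgroup lattice of the ambient group). -/
def IsMaximalIn {G : Type*} [Group G] (M K : Subgroup G) : Prop :=
  M < K ∧ ∀ L : Subgroup G, M < L → L ≤ K → L = K

/-- `P` is a Sylow `p`-subgroup of the subgroup `E`. -/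
def IsSylowIn {G : Type*} [Group G] (p : ℕ) (P E : Subgroup G) : Prop :=
  P ≤ E ∧ IsPGroup p P ∧ ¬ p ∣ (P.subgroupOf E).index

/-- `H` is s-permutable in `G`: it permutes with every Sylow subgroup of `G`. -/
def SPermutable {G : Type*} [Group G] (H : Subgroup G) : Prop :=
  ∀ q : ℕ, q.Prime → ∀ Q : Subgroup G, IsSylowIn q Q ⊤ →
    (H : Set G) * (Q : Set G) = (Q : Set G) * (H : Set G)

/-- `A/B` is a chief factor of the ambient group. -/
def IsChiefFactor {G : Type*} [Group G] (A B : Subgroup G) : Prop :=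
  A.Normal ∧ B.Normal ∧ B < A ∧ ∀ L : Subgroup G, L.Normal → B < L → L < A → False

/-- The 𝔘-hypercenter: the product of all normal subgroups `N` such that every chief
factor `A/B` with `A ≤ N` has prime order. -/
def UHypercenter (G : Type*) [Group G] : Subgroup G :=
  sSup {N : Subgroup G | N.Normal ∧
    ∀ A B : Subgroup G, IsChiefFactor A B → A ≤ N → (B.relIndex A).Prime}

/-- The 𝔖-hypercenter: the product of all normal subgroups `N` such that every chief
factor `A/B` with `A ≤ N` is abelian with `G/C_G(A/B)` soluble. -/
def SHypercenter (G : Type*) [Group G] : Subgroup G :=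
  sSup {N : Subgroup G | N.Normal ∧
    ∀ A B : Subgroup G, IsChiefFactor A B → A ≤ N →
      (∀ a ∈ A, ∀ b ∈ A, a * b * a⁻¹ * b⁻¹ ∈ B) ∧
      ∃ C : Subgroup G, ∃ _ : C.Normal,
        (∀ g : G, g ∈ C ↔ ∀ h ∈ A, g * h * g⁻¹ * h⁻¹ ∈ B) ∧ IsSolvable (G ⧸ C)}

/-- `H` is 𝔘ₛ-quasinormal in `G`. -/
def UsQuasinormal {G : Type*} [Group G] (H : Subgroup G) : Prop :=
  ∃ T : Subgroup G, T.Normal ∧ SPermutable (H ⊔ T) ∧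
    ∀ x ∈ H ⊓ T,
      (QuotientGroup.mk x : G ⧸ H.normalCore) ∈ UHypercenter (G ⧸ H.normalCore)

/-- `H` is 𝔖ₛ-quasinormal in `G`. -/
def SsQuasinormal {G : Type*} [Group G] (H : Subgroup G) : Prop :=
  ∃ T : Subgroup G, T.Normal ∧ SPermutable (H ⊔ T) ∧
    ∀ x ∈ H ⊓ T,
      (QuotientGroup.mk x : G ⧸ H.normalCore) ∈ SHypercenter (G ⧸ H.normalCore)

/-- A group is supersoluble if it has a chain of subgroups, each normal in the whole
group, reaching from `⊥` to `⊤`, with all successive factors cyclic. -/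
def IsSupersoluble (G : Type*) [Group G] : Prop :=
  ∃ (k : ℕ) (c : Fin (k + 1) → Subgroup G),
    c 0 = ⊥ ∧ c (Fin.last k) = ⊤ ∧ (∀ i, (c i).Normal) ∧
    (∀ i : Fin k, c i.castSucc ≤ c i.succ) ∧
    ∀ i : Fin k, ∃ g ∈ c i.succ, ∀ x ∈ c i.succ, ∃ m : ℤ, x⁻¹ * g ^ m ∈ c i.castSucc

/-- `A` is subnormal in `G`. -/
def IsSubnormal {G : Type*} [Group G] (A : Subgroup G) : Prop :=
  ∃ (n : ℕ) (c : Fin (n + 1) → Subgroup G), c 0 = A ∧ c (Fin.last n) = ⊤ ∧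
    ∀ i : Fin n, c i.castSucc ≤ c i.succ ∧
      ∀ x ∈ c i.succ, ∀ a ∈ c i.castSucc, x * a * x⁻¹ ∈ c i.castSucc

/-- `H` has a supersoluble supplement in the ambient group. -/
def HasSupersolubleSupplement {G : Type*} [Group G] (H : Subgroup G) : Prop :=
  ∃ T : Subgroup G, IsSupersoluble T ∧ (H : Set G) * (T : Set G) = Set.univ

/-- A group is `p`-nilpotent if it has a normal subgroup of order prime to `p`
and of `p`-power index (a normal `p`-complement). -/
def IsPNilpotent (p : ℕ) (G : Type*) [Group G] : Prop :=
  ∃ N : Subgroup G, N.Normal ∧ Nat.Coprime (Nat.card N) p ∧ ∃ k : ℕ, N.index = p ^ k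

/-- `H` has a `p`-nilpotent supplement in the ambient group. -/
def HasPNilpotentSupplement {G : Type*} [Group G] (p : ℕ) (H : Subgroup G) : Prop :=
  ∃ T : Subgroup G, IsPNilpotent p T ∧ (H : Set G) * (T : Set G) = Set.univ

/-- `H` is an `n`-maximal subgroup of `P`: there is a chain
`H = Hₙ < ⋯ < H₁ < H₀ = P` with each term maximal in the preceding one. -/
def IsNMaximalIn {G : Type*} [Group G] (n : ℕ) (H P : Subgroup G) : Prop :=
  ∃ c : Fin (n + 1) → Subgroup G, c 0 = P ∧ c (Fin.last n) = H ∧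
    ∀ i : Fin n, IsMaximalIn (c i.succ) (c i.castSucc)

/-- A group is quasinilpotent if every element induces an inner automorphism
on every chief factor. -/
def IsQuasinilpotentGroup (G : Type*) [Group G] : Prop :=
  ∀ A B : Subgroup G, IsChiefFactor A B →
    ∀ x : G, ∃ y ∈ A, ∀ h ∈ A, (x * h * x⁻¹) * (y * h * y⁻¹)⁻¹ ∈ B

/-- The generalized Fitting subgroup: the product of all normal quasinilpotent
subgroups. -/
def generalizedFitting (G : Type*) [Group G] : Subgroup G :=
  sSup {N : Subgroup G | N.Normal ∧ IsQuasinilpotentGroup N}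

/-- The generalized Fitting subgroup of a subgroup `H`, as a subgroup of `G`. -/
def FStarIn {G : Type*} [Group G] (H : Subgroup G) : Subgroup G :=
  (generalizedFitting H).map H.subtype

/-- The Fitting subgroup: the product of all nilpotent normal subgroups. -/
def fittingSubgroup (G : Type*) [Group G] : Subgroup G :=
  sSup {N : Subgroup G | N.Normal ∧ Group.IsNilpotent N}

/-- The Fitting subgroup of a subgroup `H`, as a subgroup of `G`. -/
def FittingIn {G : Type*} [Group G] (H : Subgroup G) : Subgroup G :=
  (fittingSubgroup H).map H.subtype

/- Let `Q` be a Sylow `q`-subgroup of `F = F(H)`. For a chief factor `Q/N` of `G`, a maximal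
subgroup of `Q` that contains `N` and is normalized by a Sylow `q`-subgroup of `G` is
𝔘ₛ-quasinormal, and this forces `|Q/N| = q`. So `G'` centralizes `Q/N`, and for `q = p` even `G`
does, as `|G|` is prime to `p - 1`.

Coprime action: if a subgroup `Y` of order prime to `q` centralizes every chief factor `Q/N` of
`G`, and some normal subgroup `X` of `G` satisfies `Y ≤ X ≤ Q C(Q) Y`, then `Y` centralizes `Q`. If
`G' ∩ H` were not contained in `F`, there would be a chief factor `A/F` of `G`, an `r`-group, with
`A ≤ (G' ∩ H) F`. By coprime action a Sylow `r`-subgroup of `A` centralizes the Sylow `q`-subgroups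
of `F` for `q ≠ r`, so that it is normal and `A` is nilpotent, contradicting `A ≰ F`. Hence `G' ∩ H
≤ F`, and `G/F` is `p`-nilpotent, being a quotient of the subgroup `G/(G' ∩ H)` of `G/G' × G/H`.
Coprime action on `O_p(F)`, applied to a complement of `O_p(F)` in the preimage of the normal
`p`-complement of `G/F`, now shows that `G` itself is `p`-nilpotent. -/

section Subgroups

variable {G : Type*} [Group G]

lemma sup_inf_assoc_of_le_of_normal {A B C : Subgroup G} [B.Normal] (h : A ≤ C) :
    (A ⊔ B) ⊓ C = A ⊔ B ⊓ C := by
  refine le_antisymm (fun x ⟨hx, hxC⟩ => ?_)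
    (sup_le (le_inf le_sup_left h) (inf_le_inf_right C le_sup_right))
  obtain ⟨a, ha, b, hb, rfl⟩ := Subgroup.mem_sup_of_normal_right.1 hx
  exact Subgroup.mul_mem_sup ha ⟨hb, (C.mul_mem_cancel_left (h ha)).1 hxC⟩

lemma relIndex_eq_card_map_mk' (N K : Subgroup G) [N.Normal] :
    N.relIndex K = Nat.card (K.map (QuotientGroup.mk' N)) := by
  rw [← Subgroup.relIndex_ker, QuotientGroup.ker_mk']

lemma relIndex_dvd_relIndex_of_normal (N : Subgroup G) [N.Normal] {U V : Subgroup G}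
    (h : U ≤ V) : N.relIndex U ∣ N.relIndex V := by
  rw [relIndex_eq_card_map_mk', relIndex_eq_card_map_mk']
  exact Subgroup.card_dvd_of_le (Subgroup.map_mono h)

lemma map_mk'_eq_bot_iff {N K : Subgroup G} [N.Normal] :
    K.map (QuotientGroup.mk' N) = ⊥ ↔ K ≤ N := by
  rw [Subgroup.map_eq_bot_iff, QuotientGroup.ker_mk']

lemma commutator_le_iff_map_mk'_le_centralizer {X Q N : Subgroup G} [N.Normal] :
    ⁅X, Q⁆ ≤ N ↔ X.map (QuotientGroup.mk' N) ≤
      Subgroup.centralizer (Q.map (QuotientGroup.mk' N) : Set (G ⧸ N)) := by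
  rw [← map_mk'_eq_bot_iff, Subgroup.map_commutator,
    Subgroup.commutator_eq_bot_iff_le_centralizer]

lemma sup_commutator_le_iff {X Y Q N : Subgroup G} [N.Normal] :
    ⁅X ⊔ Y, Q⁆ ≤ N ↔ ⁅X, Q⁆ ≤ N ∧ ⁅Y, Q⁆ ≤ N := by
  simp only [commutator_le_iff_map_mk'_le_centralizer, Subgroup.map_sup, sup_le_iff]

lemma normal_of_coprime_card_relIndex {N E : Subgroup G} [E.Normal] (hNE : N ≤ E)
    (hnorm : E ≤ Subgroup.normalizer (N : Set G))
    (hcop : (Nat.card N).Coprime (N.relIndex E)) : N.Normal where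
  conj_mem x hx g := by
    have := (Subgroup.normal_subgroupOf_iff_le_normalizer hNE).2 hnorm
    let z : E := ⟨g * x * g⁻¹, Subgroup.Normal.conj_mem ‹_› x (hNE hx) g⟩
    have hz : z ^ N.relIndex E ∈ N.subgroupOf E := Subgroup.pow_index_mem _ z
    have horder : orderOf z ∣ Nat.card N := by
      have hconj : orderOf (MulAut.conj g x) = orderOf x :=
        orderOf_injective (MulAut.conj g).toMonoidHom (MulAut.conj g).injective x
      rw [← Subgroup.orderOf_coe]
      exact hconj ▸ Subgroup.orderOf_dvd_natCard N hx
    obtain ⟨m, hm⟩ := exists_pow_eq_self_of_coprime (hcop.symm.coprime_dvd_right horder)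
    have hzN : z ∈ N.subgroupOf E := hm ▸ Subgroup.pow_mem _ hz m
    exact hzN

end Subgroups

section Sylow

variable {G : Type*} [Group G]

lemma exists_isSylowIn [Finite G] {p : ℕ} (hp : p.Prime) (E : Subgroup G) :
    ∃ P, IsSylowIn p P E := by
  have := Fact.mk hp
  let S : Sylow p E := default
  refine ⟨(S : Subgroup E).map E.subtype, Subgroup.map_subtype_le _, S.isPGroup'.map _, ?_⟩
  rw [Subgroup.subgroupOf, Subgroup.comap_map_eq_self_of_injective E.subtype_injective]
  exact S.not_dvd_index

lemma le_of_forall_isSylowIn_le {K E : Subgroup G}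
    (h : ∀ p : ℕ, p.Prime → ∃ P, IsSylowIn p P E ∧ P ≤ K) : E ≤ K := by
  rw [← Subgroup.relIndex_eq_one]
  by_contra hne
  obtain ⟨p, hp, hdvd⟩ := Nat.exists_prime_and_dvd hne
  obtain ⟨P, hP, hPK⟩ := h p hp
  exact hP.2.2 (hdvd.trans (Subgroup.relIndex_dvd_of_le_left E hPK))

lemma IsSylowIn.coprime_card_relIndex [Finite G] {p : ℕ} (hp : p.Prime) {P E : Subgroup G}
    (hP : IsSylowIn p P E) : (Nat.card P).Coprime (P.relIndex E) := by
  have := Fact.mk hp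
  obtain ⟨n, hn⟩ := IsPGroup.iff_card.1 hP.2.1
  exact hn ▸ ((Nat.Prime.coprime_iff_not_dvd hp).2 hP.2.2).pow_left n

lemma IsSylowIn.normal [Finite G] {p : ℕ} (hp : p.Prime) {P E : Subgroup G} [E.Normal]
    (hP : IsSylowIn p P E) (hnorm : E ≤ Subgroup.normalizer (P : Set G)) : P.Normal :=
  normal_of_coprime_card_relIndex hP.1 hnorm (hP.coprime_card_relIndex hp)

lemma IsSylowIn.trans {p : ℕ} (hp : p.Prime) {P E K : Subgroup G} (hP : IsSylowIn p P E)
    (hEK : E ≤ K) (hdvd : ¬ p ∣ E.relIndex K) : IsSylowIn p P K := by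
  refine ⟨hP.1.trans hEK, hP.2.1, fun h => ?_⟩
  rw [← Subgroup.relIndex, ← Subgroup.relIndex_mul_relIndex _ _ _ hP.1 hEK, hp.dvd_mul] at h
  exact h.elim hP.2.2 hdvd

lemma IsSylowIn.inf_le_of_isPGroup {p : ℕ} (hp : p.Prime) {P E Q : Subgroup G} [Q.Normal]
    (hP : IsSylowIn p P E) (hQ : IsPGroup p Q) : E ⊓ Q ≤ P := by
  have := Fact.mk hp
  let S : Sylow p E := hP.2.1.comap_subtype.toSylow hP.2.2
  have hQS : Q.subgroupOf E ≤ S := hQ.comap_subtype.le_sylow_of_normal S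
  exact fun x hx => hQS (show (⟨x, hx.1⟩ : E) ∈ Q.subgroupOf E from hx.2)

lemma coe_sup_of_mul_comm {A B : Subgroup G} (h : (A : Set G) * B = B * A) :
    ((A ⊔ B : Subgroup G) : Set G) = A * B := by
  let AB : Subgroup G :=
    { carrier := A * B
      one_mem' := ⟨1, A.one_mem, 1, B.one_mem, mul_one 1⟩
      mul_mem' := fun {x y} hx hy => by
        have : (A * B * (A * B) : Set G) = A * B := by
          rw [mul_assoc, ← mul_assoc (B : Set G), ← h, mul_assoc, coe_mul_coe, ← mul_assoc,
            coe_mul_coe]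
        exact this ▸ Set.mul_mem_mul hx hy
      inv_mem' := fun {x} hx => by
        have : (A * B : Set G)⁻¹ = A * B := by rw [mul_inv_rev, inv_coe_set, inv_coe_set, h]
        exact this ▸ Set.inv_mem_inv.2 hx }
  refine Set.Subset.antisymm (fun x hx => ?_) (fun x ⟨a, ha, b, hb, hab⟩ =>
    hab ▸ Subgroup.mul_mem_sup ha hb)
  have hle : A ⊔ B ≤ AB := sup_le (fun a ha => ⟨a, ha, 1, B.one_mem, mul_one a⟩)
    (fun b hb => ⟨1, A.one_mem, b, hb, one_mul b⟩)
  exact hle hx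

lemma relIndex_sup_of_mul_comm {A B : Subgroup G} (h : (A : Set G) * B = B * A) :
    A.relIndex (A ⊔ B) = A.relIndex B := by
  refine (Nat.card_eq_of_bijective (Subgroup.quotientSubgroupOfEmbeddingOfLE A le_sup_right)
    ⟨Function.Embedding.injective _, fun y => ?_⟩).symm
  obtain ⟨⟨x, hx⟩, rfl⟩ := QuotientGroup.mk_surjective y
  rw [← SetLike.mem_coe, coe_sup_of_mul_comm h, h] at hx
  obtain ⟨b, hb, a, ha, rfl⟩ := hx
  refine ⟨QuotientGroup.mk ⟨b, hb⟩, ?_⟩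
  rw [Subgroup.quotientSubgroupOfEmbeddingOfLE_apply_mk, QuotientGroup.eq]
  simpa [Subgroup.mem_subgroupOf] using ha

/- A Sylow `q`-subgroup of `J` is one of `J ⊔ R`, so it contains the normal `q`-subgroup
`(J ⊔ R) ⊓ Q`. -/
lemma le_normalizer_inf_of_mul_comm [Finite G] {q r : ℕ} (hq : q.Prime) (hr : r.Prime)
    (hne : q ≠ r) {J Q R : Subgroup G} [Q.Normal] (hQ : IsPGroup q Q) (hR : IsPGroup r R)
    (h : (J : Set G) * R = R * J) : R ≤ Subgroup.normalizer ((J ⊓ Q : Subgroup G) : Set G) := by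
  have := Fact.mk hr
  obtain ⟨n, hn⟩ : ∃ n, J.relIndex (J ⊔ R) = r ^ n :=
    relIndex_sup_of_mul_comm h ▸ hR.index (J.subgroupOf R)
  have hdvd : ¬ q ∣ J.relIndex (J ⊔ R) := fun hd =>
    hne ((Nat.prime_dvd_prime_iff_eq hq hr).1 (hq.dvd_of_dvd_pow (hn ▸ hd)))
  obtain ⟨S, hS⟩ := exists_isSylowIn hq J
  have hJQ : J ⊓ Q = (J ⊔ R) ⊓ Q :=
    le_antisymm (inf_le_inf_right Q le_sup_left) <| le_inf
      (((hS.trans hq le_sup_left hdvd).inf_le_of_isPGroup hq hQ).trans hS.1) inf_le_right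
  rw [hJQ]
  refine le_trans (le_inf ?_ ?_) Subgroup.inf_normalizer_le_normalizer_inf
  · exact le_sup_right.trans Subgroup.le_normalizer
  · rw [Subgroup.normalizer_eq_top]
    exact le_top

end Sylow

section Nilpotent

lemma le_of_le_commutator_sup {S : Type*} [Group S] [Group.IsNilpotent S] {Q M : Subgroup S}
    [M.Normal] (h : Q ≤ ⁅Q, ⊤⁆ ⊔ M) : Q ≤ M := by
  have hle : ∀ n, Q ≤ (⊤ : Subgroup S).lowerCentralSeries n ⊔ M := by
    intro n
    induction n with
    | zero => exact le_top.trans le_sup_left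
    | succ n ih =>
      refine h.trans (sup_le ?_ le_sup_right)
      refine (Subgroup.commutator_mono ih le_rfl).trans (sup_commutator_le_iff.2 ⟨le_sup_left, ?_⟩)
      exact (Subgroup.commutator_le_left M ⊤).trans le_sup_right
  obtain ⟨n, hn⟩ := Subgroup.nilpotent_iff_lowerCentralSeries.1 ‹Group.IsNilpotent S›
  simpa only [hn, bot_sup_eq] using hle n

lemma commutator_le_frattini (Q : Type*) [Group Q] [Group.IsNilpotent Q] :
    commutator Q ≤ frattini Q := by
  refine le_iInf₂ fun M hM => ?_
  have : M.Normal :=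
    Subgroup.NormalizerCondition.normal_of_coatom M Group.normalizerCondition_of_isNilpotent hM
  by_contra hle
  exact hM.1 <| top_le_iff.1 <| le_of_le_commutator_sup <|
    (hM.2 _ (right_lt_sup.2 hle)).symm.le

variable {G : Type*} [Group G]

lemma eq_of_le_sup_commutator {K Q : Subgroup G} [Finite Q] [Group.IsNilpotent Q] (hKQ : K ≤ Q)
    (h : Q ≤ K ⊔ ⁅Q, Q⁆) : K = Q := by
  have hmap : (K.subgroupOf Q ⊔ commutator Q).map Q.subtype = Q := by
    rw [Subgroup.map_sup, Subgroup.map_subgroupOf_eq_of_le hKQ, Subgroup.map_subtype_commutator]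
    exact le_antisymm (sup_le hKQ (Subgroup.commutator_le_self Q)) h
  have htop : K.subgroupOf Q ⊔ commutator Q = ⊤ :=
    Subgroup.map_injective Q.subtype_injective
      (by rw [hmap, ← MonoidHom.range_eq_map, Subgroup.range_subtype])
  have hK : K.subgroupOf Q ⊔ frattini Q = ⊤ :=
    top_le_iff.1 (htop ▸ sup_le_sup_left (commutator_le_frattini Q) _)
  exact le_antisymm hKQ (Subgroup.subgroupOf_eq_top.1 (frattini_nongenerating hK))

/- If `M` is maximal among the normal subgroups of `S` strictly below `Q`, then `⁅Q, S⁆ ≤ M`, so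
every subgroup between `M` and `Q` is normal. -/
lemma exists_normal_isMaximalIn {S : Type*} [Group S] [Finite S] [Group.IsNilpotent S]
    {N Q : Subgroup S} [N.Normal] [Q.Normal] (hNQ : N < Q) :
    ∃ M : Subgroup S, M.Normal ∧ N ≤ M ∧ IsMaximalIn M Q := by
  obtain ⟨M, hNM, ⟨hM, hMQ⟩, hmax⟩ :=
    (Set.toFinite {M : Subgroup S | M.Normal ∧ M < Q}).exists_le_maximal ⟨‹N.Normal›, hNQ⟩
  have hcomm : ⁅Q, ⊤⁆ ≤ M := by
    have hne : ⁅Q, ⊤⁆ ⊔ M ≠ Q := fun h => hMQ.not_ge (le_of_le_commutator_sup h.ge)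
    have hle : ⁅Q, ⊤⁆ ⊔ M ≤ Q := sup_le (Subgroup.commutator_le_left Q ⊤) hMQ.le
    exact le_sup_left.trans (hmax ⟨inferInstance, hle.lt_of_ne hne⟩ le_sup_right)
  refine ⟨M, hM, hNM, hMQ, fun L hML hLQ => ?_⟩
  have hL : L.Normal := Subgroup.commutator_top_right_le_iff.1
    ((Subgroup.commutator_mono hLQ le_rfl).trans (hcomm.trans hML.le))
  by_contra hne
  exact hML.not_ge (hmax ⟨hL, hLQ.lt_of_ne hne⟩ hML.le)

lemma IsMaximalIn.map_subtype {S : Subgroup G} {M : Subgroup S} {Q : Subgroup G} (hQS : Q ≤ S)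
    (h : IsMaximalIn M (Q.subgroupOf S)) : IsMaximalIn (M.map S.subtype) Q := by
  have hmap : ∀ {L : Subgroup G}, L ≤ S → (L.subgroupOf S).map S.subtype = L :=
    Subgroup.map_subgroupOf_eq_of_le
  have hlt {K L : Subgroup S} : K.map S.subtype < L.map S.subtype ↔ K < L :=
    Subgroup.map_lt_map_iff_of_injective S.subtype_injective
  refine ⟨hmap hQS ▸ hlt.2 h.1, fun L hML hLQ => ?_⟩
  rw [← hmap (hLQ.trans hQS), hlt] at hML
  rw [← hmap (hLQ.trans hQS), h.2 _ hML (Subgroup.comap_mono hLQ), hmap hQS]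

lemma exists_isMaximalIn_le_normalizer [Finite G] {S N Q : Subgroup G} [Group.IsNilpotent S]
    [N.Normal] [Q.Normal] (hQS : Q ≤ S) (hNQ : N < Q) :
    ∃ M : Subgroup G, N ≤ M ∧ IsMaximalIn M Q ∧ S ≤ Subgroup.normalizer (M : Set G) := by
  have hlt : N.subgroupOf S < Q.subgroupOf S := by
    rw [← Subgroup.map_lt_map_iff_of_injective S.subtype_injective,
      Subgroup.map_subgroupOf_eq_of_le hQS, Subgroup.map_subgroupOf_eq_of_le (hNQ.le.trans hQS)]
    exact hNQ
  obtain ⟨M, hM, hNM, hmax⟩ := exists_normal_isMaximalIn hlt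
  refine ⟨M.map S.subtype, ?_, hmax.map_subtype hQS, ?_⟩
  · rw [← Subgroup.map_subgroupOf_eq_of_le (hNQ.le.trans hQS)]
    exact Subgroup.map_mono hNM
  · rw [← Subgroup.normal_subgroupOf_iff_le_normalizer (Subgroup.map_subtype_le M),
      Subgroup.subgroupOf, Subgroup.comap_map_eq_self_of_injective S.subtype_injective]
    exact hM

end Nilpotent

section ChiefFactor

variable {G : Type*} [Group G]

lemma IsChiefFactor.eq_or_eq {A B L : Subgroup G} (h : IsChiefFactor A B) [hL : L.Normal]
    (hBL : B ≤ L) (hLA : L ≤ A) : L = B ∨ L = A := by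
  rcases hBL.eq_or_lt with hB | hB
  · exact .inl hB.symm
  · exact .inr (hLA.eq_of_not_lt (h.2.2.2 L hL hB))

lemma exists_isChiefFactor_ge [Finite G] {C Q : Subgroup G} [C.Normal] [Q.Normal] (hCQ : C < Q) :
    ∃ N, IsChiefFactor Q N ∧ C ≤ N := by
  obtain ⟨N, hCN, ⟨hN, hNQ⟩, hmax⟩ :=
    (Set.toFinite {N : Subgroup G | N.Normal ∧ N < Q}).exists_le_maximal ⟨‹C.Normal›, hCQ⟩
  exact ⟨N, ⟨‹_›, hN, hNQ, fun L hL hNL hLQ => hNL.not_ge (hmax ⟨hL, hLQ⟩ hNL.le)⟩, hCN⟩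

lemma exists_isChiefFactor_le [Finite G] {B K : Subgroup G} [B.Normal] [K.Normal] (hBK : B < K) :
    ∃ A, IsChiefFactor A B ∧ A ≤ K := by
  obtain ⟨A, hAK, ⟨hA, hBA⟩, hmin⟩ :=
    (Set.toFinite {A : Subgroup G | A.Normal ∧ B < A}).exists_le_minimal ⟨‹K.Normal›, hBK⟩
  exact ⟨A, ⟨hA, ‹_›, hBA, fun L hL hBL hLA => hLA.not_ge (hmin ⟨hL, hBL⟩ hLA.le)⟩, hAK⟩

lemma IsChiefFactor.comap {G' : Type*} [Group G'] {f : G →* G'} (hf : Function.Surjective f)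
    {A B : Subgroup G'} (h : IsChiefFactor A B) : IsChiefFactor (A.comap f) (B.comap f) := by
  obtain ⟨hA, hB, hBA, hmin⟩ := h
  refine ⟨inferInstance, inferInstance, (Subgroup.comap_lt_comap_of_surjective hf).2 hBA,
    fun L hL hBL hLA => ?_⟩
  have hker : f.ker ≤ L := (Subgroup.ker_le_comap f B).trans hBL.le
  rw [← Subgroup.comap_map_eq_self hker, Subgroup.comap_lt_comap_of_surjective hf] at hBL hLA
  exact hmin _ (hL.map f hf) hBL hLA

lemma IsChiefFactor.map_mk' {A B : Subgroup G} [B.Normal] (h : IsChiefFactor A B) :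
    IsChiefFactor (A.map (QuotientGroup.mk' B)) ⊥ := by
  have hsurj := QuotientGroup.mk'_surjective B
  obtain ⟨hA, -, hBA, hmin⟩ := h
  refine ⟨hA.map _ hsurj, inferInstance, bot_lt_iff_ne_bot.2 (map_mk'_eq_bot_iff.not.2 hBA.not_ge),
    fun L hL hbot hLA => ?_⟩
  rw [← Subgroup.comap_lt_comap_of_surjective hsurj] at hbot hLA
  rw [MonoidHom.comap_bot, QuotientGroup.ker_mk'] at hbot
  rw [QuotientGroup.comap_map_mk', sup_eq_right.2 hBA.le] at hLA
  exact hmin _ (hL.comap _) hbot hLA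

lemma IsChiefFactor.exists_isPGroup [Finite G] {W : Subgroup G} (h : IsChiefFactor W ⊥)
    [Group.IsSolvable W] : ∃ p : ℕ, p.Prime ∧ IsPGroup p W := by
  have hW : W.Normal := h.1
  have : Nontrivial W := (Subgroup.nontrivial_iff_ne_bot W).2 h.2.2.1.ne'
  have hcomm : ⁅W, W⁆ = ⊥ := by
    refine (h.eq_or_eq bot_le (Subgroup.commutator_le_self W)).resolve_right (fun heq => ?_)
    rw [← Subgroup.map_subtype_commutator] at heq
    refine (Group.IsSolvable.commutator_lt_top_of_nontrivial W).ne
      (Subgroup.map_injective W.subtype_injective ?_)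
    rw [heq, ← MonoidHom.range_eq_map, Subgroup.range_subtype]
  have hcent := Subgroup.commutator_eq_bot_iff_le_centralizer.1 hcomm
  obtain ⟨p, hp, hdvd⟩ := Nat.exists_prime_and_dvd (Finite.one_lt_card (α := W)).ne'
  obtain ⟨P, hP⟩ := exists_isSylowIn hp W
  have hPn : P.Normal := hP.normal hp <|
    (hcent.trans (Subgroup.centralizer_le hP.1)).trans (Subgroup.centralizer_le_normalizer _)
  refine ⟨p, hp, ?_⟩
  rcases h.eq_or_eq bot_le hP.1 with hbot | rfl
  · exact absurd (hbot ▸ hP.2.2) (by simpa using hdvd)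
  · exact hP.2.1

/- The chief factor is `(W ⊔ E) ⊓ K` over `E ⊓ K`, which is isomorphic to `(W ⊔ E) / E`, hence
to `W`. -/
lemma IsChiefFactor.exists_relIndex_eq_card {W E K : Subgroup G} [E.Normal] [K.Normal]
    (h : IsChiefFactor W ⊥) (hWK : W ≤ K ⊔ E) (hWE : W ⊓ E = ⊥) :
    ∃ A B, IsChiefFactor A B ∧ A ≤ K ∧ B.relIndex A = Nat.card W := by
  have hW : W.Normal := h.1
  have hAE : (W ⊔ E) ⊓ K ⊔ E = W ⊔ E := by
    rw [inf_comm, sup_comm, ← sup_inf_assoc_of_le_of_normal le_sup_right, sup_comm,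
      inf_eq_right.2 (sup_le hWK le_sup_right)]
  have hcard : (E ⊓ K).relIndex ((W ⊔ E) ⊓ K) = Nat.card W := by
    have hEK : E ⊓ K = E ⊓ ((W ⊔ E) ⊓ K) := by
      rw [← inf_assoc, inf_eq_left.2 (le_sup_right : E ≤ W ⊔ E)]
    rw [hEK, Subgroup.inf_relIndex_right, ← Subgroup.relIndex_sup_right, hAE,
      Subgroup.relIndex_sup_right, ← Subgroup.inf_relIndex_left, hWE, Subgroup.relIndex_bot_left]
  have hle : E ⊓ K ≤ (W ⊔ E) ⊓ K := inf_le_inf_right _ le_sup_right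
  refine ⟨(W ⊔ E) ⊓ K, E ⊓ K, ⟨inferInstance, inferInstance, hle.lt_of_ne fun heq => ?_,
    fun L hL hBL hLA => ?_⟩, inf_le_right, hcard⟩
  · rw [← heq, Subgroup.relIndex_self] at hcard
    exact h.2.2.1.ne' (Subgroup.card_eq_one.1 hcard.symm)
  rcases h.eq_or_eq bot_le (inf_le_right : (L ⊔ E) ⊓ W ≤ W) with hbot | hWL
  · refine hBL.not_ge (le_inf ?_ (hLA.le.trans inf_le_right))
    calc L ≤ (E ⊔ W) ⊓ (L ⊔ E) :=
          le_inf (hLA.le.trans (inf_le_left.trans (sup_comm W E).le)) le_sup_left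
      _ = E := by
          rw [sup_inf_assoc_of_le_of_normal le_sup_right, inf_comm, hbot, sup_bot_eq]
  · refine hLA.not_ge ?_
    calc (W ⊔ E) ⊓ K ≤ (L ⊔ E) ⊓ K :=
          inf_le_inf_right K (sup_le (inf_eq_right.1 hWL) le_sup_right)
      _ = L := by
          rw [sup_inf_assoc_of_le_of_normal (hLA.le.trans inf_le_right), sup_eq_left.2 hBL.le]

lemma IsChiefFactor.prime_card_of_le_uHypercenter [Finite G] {W : Subgroup G}
    (h : IsChiefFactor W ⊥) (hle : W ≤ UHypercenter G) : (Nat.card W).Prime := by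
  have hW : W.Normal := h.1
  suffices H : ∀ S : Set (Subgroup G), S.Finite → (∀ K ∈ S, K.Normal ∧
      ∀ A B : Subgroup G, IsChiefFactor A B → A ≤ K → (B.relIndex A).Prime) →
      W ≤ sSup S → (Nat.card W).Prime from H _ (Set.toFinite _) (fun _ hK => hK) hle
  intro S hS
  induction S, hS using Set.Finite.induction_on with
  | empty =>
    intro _ hWS
    rw [sSup_empty] at hWS
    exact absurd hWS h.2.2.1.not_ge
  | @insert K S _ _ ih =>
    intro hprime hWS
    have hSprime := fun L hL => hprime L (Set.mem_insert_of_mem K hL)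
    obtain ⟨hK, hKprime⟩ := hprime K (Set.mem_insert K S)
    have hE : (sSup S).Normal := Subgroup.sSup_normal S fun L hL => (hSprime L hL).1
    rw [sSup_insert] at hWS
    rcases h.eq_or_eq bot_le (inf_le_left : W ⊓ sSup S ≤ W) with hbot | hWE
    · obtain ⟨A, B, hAB, hAK, hcard⟩ := h.exists_relIndex_eq_card hWS hbot
      exact hcard ▸ hKprime A B hAB hAK
    · exact ih hSprime (inf_eq_left.1 hWE)

end ChiefFactor

section Quasinormal

variable {G : Type*} [Group G] [Finite G] {q : ℕ}

lemma SPermutable.normal_inf {J Q S : Subgroup G} [Q.Normal] (hJ : SPermutable J) (hq : q.Prime)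
    (hQ : IsPGroup q Q) (hS : IsSylowIn q S ⊤)
    (hSJ : S ≤ Subgroup.normalizer ((J ⊓ Q : Subgroup G) : Set G)) : (J ⊓ Q).Normal := by
  refine Subgroup.normalizer_eq_top_iff.1 (top_le_iff.1 (le_of_forall_isSylowIn_le fun r hr => ?_))
  rcases eq_or_ne q r with rfl | hne
  · exact ⟨S, hS, hSJ⟩
  · obtain ⟨R, hR⟩ := exists_isSylowIn hr (⊤ : Subgroup G)
    exact ⟨R, hR, le_normalizer_inf_of_mul_comm hq hr hne hQ hR.2.1 (hJ r hr R hR)⟩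

lemma IsMaximalIn.relIndex_eq_of_normal (hq : q.Prime) {N Q : Subgroup G} [N.Normal]
    (hQ : IsPGroup q Q) (h : IsMaximalIn N Q) : N.relIndex Q = q := by
  have := Fact.mk hq
  rw [relIndex_eq_card_map_mk']
  have hsurj := QuotientGroup.mk'_surjective N
  obtain ⟨⟨x, hxQ⟩, hx⟩ := exists_prime_orderOf_dvd_card' q <|
    (hQ.map (QuotientGroup.mk' N)).card_eq_or_dvd.resolve_left
      fun hcard => h.1.not_ge (map_mk'_eq_bot_iff.1 (Subgroup.card_eq_one.1 hcard))
  rw [Subgroup.orderOf_mk] at hx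
  have hlt : N < (Subgroup.zpowers x).comap (QuotientGroup.mk' N) := calc
    N = (⊥ : Subgroup (G ⧸ N)).comap (QuotientGroup.mk' N) := by
      rw [MonoidHom.comap_bot, QuotientGroup.ker_mk']
    _ < _ := by
      rw [Subgroup.comap_lt_comap_of_surjective hsurj, bot_lt_iff_ne_bot, ne_eq,
        Subgroup.zpowers_eq_bot, ← orderOf_eq_one_iff, hx]
      exact hq.ne_one
  have hle : (Subgroup.zpowers x).comap (QuotientGroup.mk' N) ≤ Q :=
    (Subgroup.comap_mono (Subgroup.zpowers_le.2 hxQ)).trans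
      (by rw [QuotientGroup.comap_map_mk', sup_eq_right.2 h.1.le])
  rw [← h.2 _ hlt hle, Subgroup.map_comap_eq_self_of_surjective hsurj, Nat.card_zpowers, hx]

lemma IsChiefFactor.normal_of_sPermutable_sup (hq : q.Prime) {Q N M S T : Subgroup G} [T.Normal]
    (hQ : IsPGroup q Q) (h : IsChiefFactor Q N) (hNM : N ≤ M) (hMQ : M ≤ Q) (hS : IsSylowIn q S ⊤)
    (hSM : S ≤ Subgroup.normalizer (M : Set G)) (hperm : SPermutable (M ⊔ T)) (hMT : M ⊓ T ≤ N) :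
    M.Normal := by
  have ⟨hQn, hNn, hNQ, _⟩ := h
  rcases h.eq_or_eq (le_sup_left : N ≤ N ⊔ T ⊓ Q) (sup_le hNQ.le inf_le_right) with hN | hQ'
  · have hJ : (M ⊔ T) ⊓ Q = M := by
      rw [sup_inf_assoc_of_le_of_normal hMQ, sup_eq_left.2 ((sup_eq_left.1 hN).trans hNM)]
    exact hJ ▸ hperm.normal_inf hq hQ hS (hJ.symm ▸ hSM)
  · have hMN : M = N := calc
      M = (N ⊔ T ⊓ Q) ⊓ M := by rw [hQ', inf_eq_right.2 hMQ]
      _ = N ⊔ T ⊓ Q ⊓ M := sup_inf_assoc_of_le_of_normal hNM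
      _ = N := sup_eq_left.2 ((le_inf inf_le_right (inf_le_left.trans inf_le_left)).trans hMT)
    exact hMN ▸ hNn

/- Take `M` maximal in `Q`, containing `N` and normalized by a Sylow `q`-subgroup of `G`; its core
is `N`. If `M` is not normal then `Q / N` lies in the 𝔘-hypercenter of `G / N`. -/
lemma IsChiefFactor.relIndex_eq_of_usQuasinormal (hq : q.Prime) {Q N : Subgroup G}
    (hQ : IsPGroup q Q) (h : IsChiefFactor Q N)
    (hus : ∀ M : Subgroup G, IsMaximalIn M Q → UsQuasinormal M) : N.relIndex Q = q := by
  have := Fact.mk hq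
  have ⟨hQn, hNn, hNQ, _⟩ := h
  obtain ⟨S, hQS⟩ := hQ.exists_le_sylow
  have : Group.IsNilpotent S := S.isPGroup'.isNilpotent
  obtain ⟨M, hNM, hM, hSM⟩ := exists_isMaximalIn_le_normalizer hQS hNQ
  obtain rfl : M.normalCore = N :=
    (h.eq_or_eq (Subgroup.normal_le_normalCore.2 hNM)
      ((Subgroup.normalCore_le M).trans hM.1.le)).resolve_right
      fun heq => hM.1.not_ge (heq ▸ Subgroup.normalCore_le M)
  by_cases hMn : M.Normal
  · rw [Subgroup.normalCore_eq_self]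
    exact hM.relIndex_eq_of_normal hq hQ
  obtain ⟨T, hT, hperm, hU⟩ := hus M hM
  have hW := h.map_mk'
  have hWn := hW.1
  have hUn : (UHypercenter (G ⧸ M.normalCore)).Normal := Subgroup.sSup_normal _ fun K hK => hK.1
  rcases hW.eq_or_eq bot_le (inf_le_left : _ ⊓ UHypercenter (G ⧸ M.normalCore) ≤ _) with hbot | hWU
  · have hMT : M ⊓ T ≤ M.normalCore := fun x hx => (QuotientGroup.eq_one_iff x).1 <|
      Subgroup.mem_bot.1 (hbot ▸ ⟨⟨x, hM.1.le hx.1, rfl⟩, hU x hx⟩)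
    have hS : IsSylowIn q (S : Subgroup G) ⊤ :=
      ⟨le_top, S.isPGroup', by
        rw [← Subgroup.relIndex, Subgroup.relIndex_top_right]
        exact S.not_dvd_index⟩
    exact absurd (h.normal_of_sPermutable_sup hq hQ hNM hM.1.le hS hSM hperm hMT) hMn
  · have hprime := hW.prime_card_of_le_uHypercenter (inf_eq_left.1 hWU)
    rw [relIndex_eq_card_map_mk']
    exact ((Nat.prime_dvd_prime_iff_eq hq hprime).1 <|
      (hQ.map _).card_eq_or_dvd.resolve_left hprime.ne_one).symm

end Quasinormal

section CyclicFactor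

variable {G : Type*} [Group G]

lemma ker_conjNormal (W : Subgroup G) [W.Normal] :
    (MulAut.conjNormal (H := W)).ker = Subgroup.centralizer (W : Set G) := by
  ext g
  simp only [MonoidHom.mem_ker, MulEquiv.ext_iff, Subtype.ext_iff, MulAut.conjNormal_apply,
    MulAut.one_apply, Subgroup.mem_centralizer_iff, Subtype.forall, SetLike.mem_coe,
    mul_inv_eq_iff_eq_mul]
  exact forall₂_congr fun _ _ => eq_comm

lemma commutator_le_centralizer_of_isCyclic (W : Subgroup G) [W.Normal] [IsCyclic W] :
    commutator G ≤ Subgroup.centralizer (W : Set G) := by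
  have e := IsCyclic.mulAutMulEquiv W
  have hle := Abelianization.commutator_subset_ker (e.toMonoidHom.comp MulAut.conjNormal)
  rwa [MonoidHom.ker_comp_of_injective, ker_conjNormal] at hle
  exact e.injective

lemma centralizer_eq_top_of_card_eq_prime [Finite G] {q : ℕ} (hq : q.Prime) {W : Subgroup G}
    [W.Normal] (hW : Nat.card W = q) (hcop : (Nat.card G).Coprime (q - 1)) :
    Subgroup.centralizer (W : Set G) = ⊤ := by
  have := Fact.mk hq
  have : IsCyclic W := isCyclic_of_prime_card hW
  have hcard : Nat.card (MulAut.conjNormal (H := W)).range ∣ q - 1 := by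
    rw [← Nat.totient_prime hq, ← hW, ← IsCyclic.card_mulAut]
    exact Subgroup.card_subgroup_dvd_card _
  rw [← ker_conjNormal, MonoidHom.ker_eq_top_iff, ← MonoidHom.range_eq_bot_iff,
    ← Subgroup.card_eq_one]
  exact Nat.eq_one_of_dvd_coprimes hcop (Subgroup.card_range_dvd _) hcard

variable {q : ℕ} {Q N : Subgroup G} [Q.Normal] [N.Normal]

lemma commutator_commutator_le_of_relIndex_eq_prime (hq : q.Prime) (h : N.relIndex Q = q) :
    ⁅commutator G, Q⁆ ≤ N := by
  have := Fact.mk hq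
  have hW := Subgroup.Normal.map ‹Q.Normal› _ (QuotientGroup.mk'_surjective N)
  have : IsCyclic (Q.map (QuotientGroup.mk' N)) :=
    isCyclic_of_prime_card (p := q) (relIndex_eq_card_map_mk' N Q ▸ h)
  rw [commutator_le_iff_map_mk'_le_centralizer]
  refine le_trans ?_ (commutator_le_centralizer_of_isCyclic _)
  rw [commutator_def, Subgroup.map_commutator]
  exact Subgroup.commutator_mono le_top le_top

lemma top_commutator_le_of_relIndex_eq_prime [Finite G] (hq : q.Prime) (h : N.relIndex Q = q)
    (hcop : (Nat.card G).Coprime (q - 1)) : ⁅(⊤ : Subgroup G), Q⁆ ≤ N := by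
  have hW := Subgroup.Normal.map ‹Q.Normal› _ (QuotientGroup.mk'_surjective N)
  rw [commutator_le_iff_map_mk'_le_centralizer, centralizer_eq_top_of_card_eq_prime hq
    (relIndex_eq_card_map_mk' N Q ▸ h)
    (hcop.coprime_dvd_left (Subgroup.card_quotient_dvd_card N))]
  exact le_top

end CyclicFactor

section CoprimeAction

variable {G : Type*} [Group G]

/- The product of the conjugates of `v` by the elements of `Y` is centralized by `Y` and congruent
to `v ^ |Y|` modulo `N`. -/
open scoped IsMulCommutative in
lemma pow_card_mem_inf_centralizer_sup {W Y N : Subgroup G} [W.Normal] [IsMulCommutative W]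
    [Finite Y] (h : ⁅Y, W⁆ ≤ N) {v : G} (hv : v ∈ W) :
    v ^ Nat.card Y ∈ W ⊓ Subgroup.centralizer (Y : Set G) ⊔ N := by
  have := Fintype.ofFinite Y
  let c : Y → W := fun y => MulAut.conjNormal (y : G) ⟨v, hv⟩
  have hfix (y : Y) : MulAut.conjNormal (y : G) (∏ z, c z) = ∏ z, c z := by
    rw [map_prod]
    exact Fintype.prod_equiv (Equiv.mulLeft y) _ _ fun z => by simp [c, map_mul]
  have hmod : ⟨v, hv⟩ ^ Nat.card Y / (∏ z, c z) ∈ N.subgroupOf W := by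
    rw [← inv_div, inv_mem_iff, Nat.card_eq_fintype_card, Fintype.card, ← Finset.prod_const,
      ← Finset.prod_div_distrib]
    refine Subgroup.prod_mem _ fun z _ => ?_
    have hz : (z : G) * v * (z : G)⁻¹ * v⁻¹ ∈ N :=
      h (Subgroup.commutator_mem_commutator z.2 hv)
    simpa [Subgroup.mem_subgroupOf, c, div_eq_mul_inv] using hz
  have hcent : ((∏ z, c z : W) : G) ∈ Subgroup.centralizer (Y : Set G) := fun y hy =>
    mul_inv_eq_iff_eq_mul.1 <| by
      rw [← MulAut.conjNormal_apply, hfix ⟨y, hy⟩]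
  have hprod : ((∏ z, c z : W) : G) ∈ W ⊓ Subgroup.centralizer (Y : Set G) :=
    ⟨(∏ z, c z : W).2, hcent⟩
  have hpow : v ^ Nat.card Y / ((∏ z, c z : W) : G) ∈ N := by
    simpa [Subgroup.mem_subgroupOf] using hmod
  rw [← div_mul_cancel (v ^ Nat.card Y) ((∏ z, c z : W) : G), sup_comm]
  exact Subgroup.mul_mem_sup hpow hprod

lemma le_inf_centralizer_sup_of_isMulCommutative {W Y N : Subgroup G} [W.Normal]
    [IsMulCommutative W] [Finite Y] (hcop : (Nat.card W).Coprime (Nat.card Y))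
    (h : ⁅Y, W⁆ ≤ N) : W ≤ W ⊓ Subgroup.centralizer (Y : Set G) ⊔ N := by
  intro v hv
  have hord : (Nat.card Y).Coprime (orderOf v) :=
    (hcop.coprime_dvd_left (Subgroup.orderOf_dvd_natCard W hv)).symm
  obtain ⟨m, hm⟩ := exists_pow_eq_self_of_coprime hord
  exact hm ▸ pow_mem (pow_card_mem_inf_centralizer_sup h hv) m

lemma le_centralizer_of_isMulCommutative [Finite G] {Q X Y : Subgroup G} [Q.Normal] [X.Normal]
    [IsMulCommutative Q] (hcop : (Nat.card Q).Coprime (Nat.card Y))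
    (hX : X ≤ Subgroup.centralizer (Q : Set G) ⊔ Y)
    (hchief : ∀ N, IsChiefFactor Q N → ⁅Y, Q⁆ ≤ N) : X ≤ Subgroup.centralizer (Q : Set G) := by
  let C := Q ⊓ Subgroup.centralizer (X : Set G)
  have hYC : Q ⊓ Subgroup.centralizer (Y : Set G) ≤ C := by
    refine le_inf inf_le_left (Subgroup.le_centralizer_iff.1 (hX.trans (sup_le ?_ ?_)))
    · exact Subgroup.centralizer_le inf_le_left
    · exact Subgroup.le_centralizer_iff.1 inf_le_right
  rw [Subgroup.le_centralizer_iff]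
  by_contra hQX
  obtain ⟨N, hN, hCN⟩ := exists_isChiefFactor_ge (C := C) (Q := Q)
    (inf_le_left.lt_of_ne fun h => hQX (inf_eq_left.1 h))
  have := hN.2.1
  have hQN := (le_inf_centralizer_sup_of_isMulCommutative hcop (hchief N hN)).trans
    (sup_le (hYC.trans hCN) le_rfl)
  exact hN.2.2.1.not_ge hQN

/- Applies the abelian case to the image of `Q` in `G ⧸ ⁅Q, Q⁆`. -/
lemma commutator_le_commutator_self [Finite G] {Q X Y : Subgroup G} [Q.Normal] [X.Normal]
    (hcop : (Nat.card Q).Coprime (Nat.card Y))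
    (hX : X ≤ Q ⊔ Subgroup.centralizer (Q : Set G) ⊔ Y)
    (hchief : ∀ N, IsChiefFactor Q N → ⁅Y, Q⁆ ≤ N) : ⁅X, Q⁆ ≤ ⁅Q, Q⁆ := by
  let f := QuotientGroup.mk' ⁅Q, Q⁆
  have hf := QuotientGroup.mk'_surjective ⁅Q, Q⁆
  have := Subgroup.Normal.map ‹Q.Normal› f hf
  have := Subgroup.Normal.map ‹X.Normal› f hf
  have hself : Q.map f ≤ Subgroup.centralizer (Q.map f : Set (G ⧸ ⁅Q, Q⁆)) :=
    commutator_le_iff_map_mk'_le_centralizer.1 le_rfl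
  have : IsMulCommutative (Q.map f) := Subgroup.le_centralizer_iff_isMulCommutative.1 hself
  rw [commutator_le_iff_map_mk'_le_centralizer]
  refine le_centralizer_of_isMulCommutative (Y := Y.map f) ?_ ?_ fun N hN => ?_
  · exact Nat.Coprime.of_dvd (Subgroup.card_map_dvd Q f) (Subgroup.card_map_dvd Y f) hcop
  · refine (Subgroup.map_mono hX).trans ?_
    rw [Subgroup.map_sup, Subgroup.map_sup]
    exact sup_le_sup_right (sup_le hself (Subgroup.map_centralizer_le_centralizer_image _ _)) _
  · have hQ : (Q.map f).comap f = Q := by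
      rw [QuotientGroup.comap_map_mk', sup_eq_right]
      exact Subgroup.commutator_le_left Q Q
    rw [← Subgroup.map_commutator, Subgroup.map_le_iff_le_comap]
    have hcomap := hN.comap hf
    rw [hQ] at hcomap
    exact hchief _ hcomap

/- An `r`-group permuting the elements of the coset `v * D` fixes one of them. -/
lemma le_centralizer_inf_sup_of_isPGroup {r : ℕ} [Fact r.Prime] {Q R D : Subgroup G}
    [D.Normal] (hR : IsPGroup r R) (hDQ : D ≤ Q) (hrD : ¬ r ∣ Nat.card D)
    (h : ⁅R, Q⁆ ≤ D) : Q ≤ Subgroup.centralizer (R : Set G) ⊓ Q ⊔ D := by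
  intro v hv
  let act : MulAction R G := MulAction.compHom G (MulAut.conj.comp R.subtype)
  have hQ {g : G} (hg : v⁻¹ * g ∈ D) : g ∈ Q := by
    simpa using Q.mul_mem hv (hDQ hg)
  let S : SubMulAction R G :=
    { carrier := {g | v⁻¹ * g ∈ D}
      smul_mem' := fun x g hg => by
        have hxg : x * g * (x : G)⁻¹ * g⁻¹ ∈ D :=
          h (Subgroup.commutator_mem_commutator x.2 (hQ hg))
        change v⁻¹ * g ∈ D at hg
        change v⁻¹ * (x * g * (x : G)⁻¹) ∈ D
        rw [‹D.Normal›.mem_comm_iff] at hg ⊢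
        simpa [mul_assoc] using D.mul_mem hxg hg }
  have hS : Nat.card S = Nat.card D :=
    Nat.card_congr ((Equiv.mulLeft v⁻¹).subtypeEquiv fun _ => Iff.rfl)
  obtain ⟨⟨g, hg⟩, hfix⟩ := hR.nonempty_fixed_point_of_prime_not_dvd_card S (hS ▸ hrD)
  have hgC : g ∈ Subgroup.centralizer (R : Set G) := fun x hx =>
    mul_inv_eq_iff_eq_mul.1 (congrArg Subtype.val (hfix ⟨x, hx⟩))
  have hgv : g⁻¹ * v ∈ D := by simpa using D.inv_mem hg
  simpa using Subgroup.mul_mem_sup (show g ∈ _ ⊓ Q from ⟨hgC, hQ hg⟩) hgv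

lemma le_centralizer_of_commutator_le_commutator_self {q r : ℕ} (hq : q.Prime) (hr : r.Prime)
    (hrq : r ≠ q) {Q R : Subgroup G} [Finite Q] [Q.Normal] (hQ : IsPGroup q Q) (hR : IsPGroup r R)
    (h : ⁅R, Q⁆ ≤ ⁅Q, Q⁆) : R ≤ Subgroup.centralizer (Q : Set G) := by
  have := Fact.mk hq
  have := Fact.mk hr
  have := hQ.isNilpotent
  have hDQ := Subgroup.commutator_le_left Q Q
  have : Finite (⁅Q, Q⁆ : Subgroup G) := Finite.Set.subset (Q : Set G) hDQ
  have hrD : ¬ r ∣ Nat.card (⁅Q, Q⁆ : Subgroup G) := by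
    obtain ⟨n, hn⟩ := IsPGroup.iff_card.1 (hQ.to_le hDQ)
    rw [hn]
    exact fun hd => hrq ((Nat.prime_dvd_prime_iff_eq hr hq).1 (hr.dvd_of_dvd_pow hd))
  have hfix := eq_of_le_sup_commutator inf_le_right
    (le_centralizer_inf_sup_of_isPGroup hR hDQ hrD h)
  exact Subgroup.le_centralizer_iff.1 (inf_eq_right.1 hfix)

lemma le_centralizer_of_forall_isChiefFactor [Finite G] {q : ℕ} (hq : q.Prime)
    {Q X Y : Subgroup G} [Q.Normal] [X.Normal] (hQ : IsPGroup q Q)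
    (hcop : q.Coprime (Nat.card Y)) (hYX : Y ≤ X)
    (hX : X ≤ Q ⊔ Subgroup.centralizer (Q : Set G) ⊔ Y)
    (hchief : ∀ N, IsChiefFactor Q N → ⁅Y, Q⁆ ≤ N) : Y ≤ Subgroup.centralizer (Q : Set G) := by
  have := Fact.mk hq
  have hQY : (Nat.card Q).Coprime (Nat.card Y) := by
    obtain ⟨n, hn⟩ := IsPGroup.iff_card.1 hQ
    exact hn ▸ hcop.pow_left n
  have hXQ := commutator_le_commutator_self hQY hX hchief
  refine le_of_forall_isSylowIn_le fun r hr => ?_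
  by_cases hrq : r = q
  · subst hrq
    exact ⟨⊥, ⟨bot_le, IsPGroup.of_bot, by
      simpa [Subgroup.index_bot] using (Nat.Prime.coprime_iff_not_dvd hr).1 hcop⟩, bot_le⟩
  · obtain ⟨R, hR⟩ := exists_isSylowIn hr Y
    exact ⟨R, hR, le_centralizer_of_commutator_le_commutator_self hq hr hrq hQ hR.2.1
      ((Subgroup.commutator_mono (hR.1.trans hYX) le_rfl).trans hXQ)⟩

end CoprimeAction

section Fitting

variable {G : Type*} [Group G]

lemma IsSylowIn.normal_of_isNilpotent [Finite G] {p : ℕ} (hp : p.Prime) {P E : Subgroup G}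
    [E.Normal] [Group.IsNilpotent E] (hP : IsSylowIn p P E) : P.Normal := by
  have := Fact.mk hp
  let S : Sylow p E := (hP.2.1.comap_of_injective _ E.subtype_injective).toSylow hP.2.2
  refine hP.normal hp ((Subgroup.normal_subgroupOf_iff_le_normalizer hP.1).1 ?_)
  exact inferInstanceAs (S : Subgroup E).Normal

lemma isNilpotent_of_forall_exists_normal_isSylowIn {E : Subgroup G} [Finite E]
    (h : ∀ p : ℕ, p.Prime → ∃ P : Subgroup G, P.Normal ∧ IsSylowIn p P E) :
    Group.IsNilpotent E := by
  refine ((Group.isNilpotent_of_finite_tfae (G := E)).out 0 3).2 ?_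
  intro p _ S
  obtain ⟨P, hPn, hP⟩ := h p Fact.out
  let T : Sylow p E := (hP.2.1.comap_of_injective _ E.subtype_injective).toSylow hP.2.2
  have hT : (T : Subgroup E).Normal := inferInstanceAs (P.subgroupOf E).Normal
  have := Sylow.unique_of_normal T hT
  exact Subsingleton.elim T S ▸ hT

lemma isNilpotent_sup [Finite G] {M N : Subgroup G} [M.Normal] [N.Normal] [Group.IsNilpotent M]
    [Group.IsNilpotent N] : Group.IsNilpotent (M ⊔ N : Subgroup G) := by
  refine isNilpotent_of_forall_exists_normal_isSylowIn fun p hp => ?_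
  obtain ⟨P, hP⟩ := exists_isSylowIn hp M
  obtain ⟨Q, hQ⟩ := exists_isSylowIn hp N
  have := hP.normal_of_isNilpotent hp
  have := hQ.normal_of_isNilpotent hp
  have hM : M ⊔ (P ⊔ Q) = M ⊔ Q := by rw [← sup_assoc, sup_eq_left.2 hP.1]
  have hN : N ⊔ (M ⊔ Q) = M ⊔ N := by rw [sup_left_comm, sup_eq_left.2 hQ.1]
  refine ⟨P ⊔ Q, inferInstance, sup_le_sup hP.1 hQ.1, hP.2.1.to_sup_of_normal_left hQ.2.1, ?_⟩
  rw [← Subgroup.relIndex, ← Subgroup.relIndex_mul_relIndex _ (M ⊔ Q) _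
    (sup_le_sup_right hP.1 Q) (sup_le_sup_left hQ.1 M), ← hM, Subgroup.relIndex_sup_right, hM,
    ← hN, Subgroup.relIndex_sup_right, hp.dvd_mul]
  rintro (h | h)
  · exact hP.2.2 (h.trans (Subgroup.relIndex_dvd_of_le_left M le_sup_left))
  · exact hQ.2.2 (h.trans (Subgroup.relIndex_dvd_of_le_left N le_sup_right))

lemma isNilpotent_fittingSubgroup [Finite G] : Group.IsNilpotent (fittingSubgroup G) := by
  let S := {N : Subgroup G | N.Normal ∧ Group.IsNilpotent N}
  have hS : SupClosed S := by
    rintro M ⟨_, _⟩ N ⟨_, _⟩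
    exact ⟨inferInstance, isNilpotent_sup⟩
  exact (hS.sSup_mem (Set.toFinite S) ⟨inferInstance, inferInstance⟩ subset_rfl).2

lemma characteristic_fittingSubgroup : (fittingSubgroup G).Characteristic := by
  refine Subgroup.characteristic_iff_le_comap.2 fun φ => sSup_le fun N ⟨hN, _⟩ => ?_
  rw [← Subgroup.map_le_iff_le_comap]
  exact le_sSup ⟨hN.map _ φ.surjective, Group.nilpotent_of_surjective
    (φ.toMonoidHom.subgroupMap N) (MonoidHom.subgroupMap_surjective _ _)⟩

variable {H : Subgroup G}

lemma fittingIn_le : FittingIn H ≤ H :=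
  Subgroup.map_subtype_le _

lemma isNilpotent_fittingIn [Finite G] : Group.IsNilpotent (FittingIn H) :=
  have := isNilpotent_fittingSubgroup (G := H)
  Group.nilpotent_of_surjective (H.subtype.subgroupMap _) (MonoidHom.subgroupMap_surjective _ _)

lemma normal_fittingIn [H.Normal] : (FittingIn H).Normal :=
  have := characteristic_fittingSubgroup (G := H)
  inferInstanceAs ((fittingSubgroup H).map H.subtype).Normal

lemma le_fittingIn {N : Subgroup G} [N.Normal] [Group.IsNilpotent N] (hNH : N ≤ H) :
    N ≤ FittingIn H := by
  rw [← Subgroup.map_subgroupOf_eq_of_le hNH]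
  exact Subgroup.map_mono (le_sSup ⟨inferInstance,
    Group.nilpotent_of_mulEquiv (Subgroup.subgroupOfEquivOfLe hNH).symm⟩)

lemma IsSylowIn.le_sup_centralizer [Finite G] {q : ℕ} (hq : q.Prime) {Q E : Subgroup G} [E.Normal]
    [Group.IsNilpotent E] (hQ : IsSylowIn q Q E) : E ≤ Q ⊔ Subgroup.centralizer (Q : Set G) := by
  refine le_of_forall_isSylowIn_le fun r hr => ?_
  rcases eq_or_ne r q with rfl | hrq
  · exact ⟨Q, hQ, le_sup_left⟩
  obtain ⟨R, hR⟩ := exists_isSylowIn hr E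
  have hQn := hQ.normal_of_isNilpotent hq
  have hRn := hR.normal_of_isNilpotent hr
  have := Fact.mk hq
  have := Fact.mk hr
  have hdisj := IsPGroup.disjoint_of_ne q r hrq.symm _ _ hQ.2.1 hR.2.1
  exact ⟨R, hR, le_sup_of_le_right fun x hx y hy =>
    Subgroup.commute_of_normal_of_disjoint _ _ hQn hRn hdisj y x hy hx⟩

lemma IsSylowIn.le_sup_of_relIndex_eq_pow {r k : ℕ} (hr : r.Prime) {R A F : Subgroup G}
    (hR : IsSylowIn r R A) (hk : F.relIndex A = r ^ k) : A ≤ F ⊔ R := by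
  rw [← Subgroup.relIndex_eq_one]
  exact Nat.eq_one_of_dvd_coprimes (((Nat.Prime.coprime_iff_not_dvd hr).2 hR.2.2).pow_left k)
    (hk ▸ Subgroup.relIndex_dvd_of_le_left A le_sup_left)
    (Subgroup.relIndex_dvd_of_le_left A le_sup_right)

lemma IsChiefFactor.exists_relIndex_eq_pow [Finite G] {A B : Subgroup G} (h : IsChiefFactor A B)
    [Group.IsSolvable A] : ∃ r k : ℕ, r.Prime ∧ B.relIndex A = r ^ k := by
  have := h.2.1
  have : Group.IsSolvable (A.map (QuotientGroup.mk' B)) :=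
    Group.isSolvable_of_surjective (f := (QuotientGroup.mk' B).subgroupMap A)
      (MonoidHom.subgroupMap_surjective _ _)
  obtain ⟨r, hr, hAr⟩ := h.map_mk'.exists_isPGroup
  have := Fact.mk hr
  obtain ⟨k, hk⟩ := IsPGroup.iff_card.1 hAr
  exact ⟨r, k, hr, by rw [relIndex_eq_card_map_mk', hk]⟩

lemma IsChiefFactor.commutator_self_le [Finite G] {Q N : Subgroup G} (h : IsChiefFactor Q N)
    [Group.IsNilpotent Q] : ⁅Q, Q⁆ ≤ N := by
  have := h.1
  have := h.2.1
  rcases h.eq_or_eq (L := N ⊔ ⁅Q, Q⁆) le_sup_left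
    (sup_le h.2.2.1.le (Subgroup.commutator_le_left Q Q)) with hN | hQ
  · exact sup_eq_left.1 hN
  · exact absurd (eq_of_le_sup_commutator h.2.2.1.le hQ.ge) h.2.2.1.ne

lemma IsSylowIn.le_fittingIn_of_le_sup [Finite G] [H.Normal] {r : ℕ} (hr : r.Prime)
    {A R : Subgroup G} [A.Normal] (hFA : FittingIn H ≤ A) (hAH : A ≤ H) (hR : IsSylowIn r R A)
    (hAR : A ≤ FittingIn H ⊔ R)
    (hcent : ∀ s Q, s.Prime → s ≠ r → IsSylowIn s Q (FittingIn H) →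
      R ≤ Subgroup.centralizer (Q : Set G)) : A ≤ FittingIn H := by
  have := normal_fittingIn (H := H)
  have := isNilpotent_fittingIn (H := H)
  have hFR : FittingIn H ≤ Subgroup.normalizer (R : Set G) := by
    refine le_of_forall_isSylowIn_le fun s hs => ?_
    obtain ⟨Q, hQ⟩ := exists_isSylowIn hs (FittingIn H)
    have := hQ.normal_of_isNilpotent hs
    refine ⟨Q, hQ, ?_⟩
    rcases eq_or_ne s r with rfl | hsr
    · exact (le_inf (hQ.1.trans hFA) le_rfl).trans
        ((hR.inf_le_of_isPGroup hs hQ.2.1).trans Subgroup.le_normalizer)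
    · exact (Subgroup.le_centralizer_iff.1 (hcent s Q hs hsr hQ)).trans
        (Subgroup.centralizer_le_normalizer _)
  have := hR.normal hr (hAR.trans (sup_le hFR Subgroup.le_normalizer))
  have := Fact.mk hr
  have := hR.2.1.isNilpotent
  exact hAR.trans (sup_le le_rfl (le_fittingIn (hR.1.trans hAH)))

lemma commutator_inf_le_fittingIn [Finite G] [H.Normal] [Group.IsSolvable H]
    (h : ∀ q Q N, q.Prime → IsSylowIn q Q (FittingIn H) → IsChiefFactor Q N →
      ⁅commutator G, Q⁆ ≤ N) : commutator G ⊓ H ≤ FittingIn H := by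
  have hFn := normal_fittingIn (H := H)
  have := isNilpotent_fittingIn (H := H)
  by_contra hne
  obtain ⟨A, hA, hAK⟩ := exists_isChiefFactor_le (B := FittingIn H)
    (K := commutator G ⊓ H ⊔ FittingIn H) (right_lt_sup.2 hne)
  have := hA.1
  have hAH : A ≤ H := hAK.trans (sup_le inf_le_right fittingIn_le)
  have : Group.IsSolvable A :=
    Group.isSolvable_of_isSolvable_injective (Subgroup.inclusion_injective hAH)
  obtain ⟨r, k, hr, hk⟩ := hA.exists_relIndex_eq_pow
  obtain ⟨R, hR⟩ := exists_isSylowIn hr A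
  have hAR := hR.le_sup_of_relIndex_eq_pow hr hk
  refine hA.2.2.1.not_ge (hR.le_fittingIn_of_le_sup hr hA.2.2.1.le hAH hAR fun s Q hs hsr hQ => ?_)
  have := Fact.mk hs
  have := Fact.mk hr
  have := hQ.normal_of_isNilpotent hs
  have := hQ.2.1.isNilpotent
  have hFQ := hQ.le_sup_centralizer hs
  have hsR : s.Coprime (Nat.card R) := by
    obtain ⟨n, hn⟩ := IsPGroup.iff_card.1 hR.2.1
    exact hn ▸ ((Nat.coprime_primes hs hr).2 hsr).pow_right n
  refine le_centralizer_of_forall_isChiefFactor hs hQ.2.1 hsR hR.1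
    (hAR.trans (sup_le_sup_right hFQ R)) fun N hN => ?_
  have := hN.2.1
  have hQC : ⁅Subgroup.centralizer (Q : Set G), Q⁆ ≤ N :=
    (Subgroup.commutator_eq_bot_iff_le_centralizer.2 le_rfl).le.trans bot_le
  have hFN : ⁅FittingIn H, Q⁆ ≤ N := (Subgroup.commutator_mono hFQ le_rfl).trans
    (sup_commutator_le_iff.2 ⟨hN.commutator_self_le, hQC⟩)
  refine (Subgroup.commutator_mono (hR.1.trans (hAK.trans (sup_le_sup_right inf_le_left _)))
    le_rfl).trans (sup_commutator_le_iff.2 ⟨h s Q N hs hQ hN, hFN⟩)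

end Fitting

section PNilpotent

variable {G : Type*} [Group G] {p : ℕ}

lemma IsPNilpotent.of_surjective {G' : Type*} [Group G'] (hp : p.Prime) (h : IsPNilpotent p G)
    {f : G →* G'} (hf : Function.Surjective f) : IsPNilpotent p G' := by
  obtain ⟨N, hN, hcop, k, hk⟩ := h
  obtain ⟨j, -, hj⟩ := (Nat.dvd_prime_pow hp).1 (hk ▸ N.index_map_dvd hf)
  exact ⟨N.map f, hN.map f hf, hcop.coprime_dvd_left (Subgroup.card_map_dvd N f), j, hj⟩

lemma isPNilpotent_of_isMulCommutative [Finite G] [IsMulCommutative G] (hp : p.Prime) :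
    IsPNilpotent p G := by
  have := Fact.mk hp
  let P : Sylow p G := default
  obtain ⟨Y, hY⟩ := Subgroup.exists_right_complement'_of_coprime P.card_coprime_index
  obtain ⟨n, hn⟩ := IsPGroup.iff_card.1 P.isPGroup'
  refine ⟨Y, inferInstance, ?_, n, hY.index_eq_card.trans hn⟩
  rw [← hY.symm.index_eq_card]
  exact ((Nat.Prime.coprime_iff_not_dvd hp).2 P.not_dvd_index).symm

lemma isPNilpotent_quotient_iff (hp : p.Prime) {N : Subgroup G} [N.Normal] :
    IsPNilpotent p (G ⧸ N) ↔
      ∃ X : Subgroup G, X.Normal ∧ N ≤ X ∧ ¬ p ∣ N.relIndex X ∧ ∃ k, X.index = p ^ k := by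
  have hf := QuotientGroup.mk'_surjective N
  constructor
  · rintro ⟨Y, hYn, hY, k, hk⟩
    refine ⟨Y.comap (QuotientGroup.mk' N), inferInstance, QuotientGroup.le_comap_mk' N Y, ?_, k,
      (Subgroup.index_comap_of_surjective _ hf).trans hk⟩
    rw [relIndex_eq_card_map_mk', Subgroup.map_comap_eq_self_of_surjective hf]
    exact (Nat.Prime.coprime_iff_not_dvd hp).1 hY.symm
  · rintro ⟨X, hXn, hNX, hX, k, hk⟩
    refine ⟨X.map (QuotientGroup.mk' N), hXn.map _ hf, ?_, k, ?_⟩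
    · rw [← relIndex_eq_card_map_mk']
      exact ((Nat.Prime.coprime_iff_not_dvd hp).2 hX).symm
    · rw [Subgroup.index_map_eq _ hf (by rwa [QuotientGroup.ker_mk']), hk]

lemma isPNilpotent_quotient_of_inf_le (hp : p.Prime) {A B F : Subgroup G} [A.Normal] [B.Normal]
    [F.Normal] (hA : IsPNilpotent p (G ⧸ A)) (hB : IsPNilpotent p (G ⧸ B))
    (hF : A ⊓ B ≤ F) : IsPNilpotent p (G ⧸ F) := by
  obtain ⟨X, _, -, hX, a, ha⟩ := (isPNilpotent_quotient_iff hp).1 hA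
  obtain ⟨Y, _, -, hY, b, hb⟩ := (isPNilpotent_quotient_iff hp).1 hB
  rw [isPNilpotent_quotient_iff hp]
  refine ⟨X ⊓ Y ⊔ F, inferInstance, le_sup_right, fun hdvd => ?_, ?_⟩
  · have hdvd' : p ∣ (A ⊓ B).relIndex (X ⊓ Y) :=
      (Subgroup.relIndex_sup_right (X ⊓ Y) F ▸ hdvd).trans
        (Subgroup.relIndex_dvd_of_le_left _ hF)
    rw [← Subgroup.relIndex_inf_mul_relIndex, hp.dvd_mul] at hdvd'
    rcases hdvd' with h | h
    · exact hX (h.trans (relIndex_dvd_relIndex_of_normal A (inf_le_right.trans inf_le_left)))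
    · exact hY (h.trans (relIndex_dvd_relIndex_of_normal B inf_le_right))
  · have hindex : (X ⊓ Y ⊔ F).index ∣ p ^ (b + a) := by
      refine (Subgroup.index_dvd_of_le le_sup_left).trans ?_
      rw [← Subgroup.relIndex_mul_index (inf_le_left : X ⊓ Y ≤ X), Subgroup.inf_relIndex_left,
        pow_add, ha, ← hb]
      exact mul_dvd_mul_right (Subgroup.relIndex_dvd_index_of_normal Y X) _
    obtain ⟨k, -, hk⟩ := (Nat.dvd_prime_pow hp).1 hindex
    exact ⟨k, hk⟩

lemma exists_complement_of_coprime {P X : Subgroup G} [P.Normal] (hPX : P ≤ X)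
    (hcop : (Nat.card P).Coprime (P.relIndex X)) :
    ∃ Y ≤ X, X ≤ P ⊔ Y ∧ Nat.card Y = P.relIndex X ∧ Y.relIndex X = Nat.card P := by
  have hcard : Nat.card (P.subgroupOf X) = Nat.card P :=
    Nat.card_congr (Subgroup.subgroupOfEquivOfLe hPX).toEquiv
  obtain ⟨Z, hZ⟩ := Subgroup.exists_right_complement'_of_coprime (N := P.subgroupOf X)
    (by rwa [hcard])
  have hsup := congrArg (Subgroup.map X.subtype) hZ.sup_eq_top
  rw [Subgroup.map_sup, Subgroup.map_subgroupOf_eq_of_le hPX, ← MonoidHom.range_eq_map,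
    X.range_subtype] at hsup
  refine ⟨Z.map X.subtype, Subgroup.map_subtype_le Z, hsup.ge, ?_, ?_⟩
  · rw [Subgroup.card_map_of_injective X.subtype_injective, Subgroup.relIndex,
      hZ.symm.index_eq_card]
  · rw [Subgroup.relIndex, Subgroup.subgroupOf,
      Subgroup.comap_map_eq_self_of_injective X.subtype_injective, hZ.index_eq_card, hcard]

/- A complement `Y` of `P` in `X` acts trivially on the chief factors at the top of `P`, hence on
`P`, so that `X = P × Y` and `Y` is the `p`-complement. -/
lemma isPNilpotent_of_forall_isChiefFactor [Finite G] (hp : p.Prime) {P X : Subgroup G}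
    [P.Normal] [X.Normal] {k : ℕ} (hP : IsSylowIn p P X) (hX : X.index = p ^ k)
    (hchief : ∀ N, IsChiefFactor P N → ⁅X, P⁆ ≤ N) : IsPNilpotent p G := by
  have := Fact.mk hp
  obtain ⟨n, hn⟩ := IsPGroup.iff_card.1 hP.2.1
  obtain ⟨Y, hYX, hXY, hcard, hindex⟩ :=
    exists_complement_of_coprime hP.1 (hP.coprime_card_relIndex hp)
  have hpY : p.Coprime (Nat.card Y) := by
    rw [hcard]
    exact (Nat.Prime.coprime_iff_not_dvd hp).2 hP.2.2
  have hYC : Y ≤ Subgroup.centralizer (P : Set G) :=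
    le_centralizer_of_forall_isChiefFactor hp hP.2.1 hpY hYX
      (hXY.trans (sup_le_sup_right le_sup_left Y)) fun N hN =>
        (Subgroup.commutator_mono hYX le_rfl).trans (hchief N hN)
  have hnorm : X ≤ Subgroup.normalizer (Y : Set G) :=
    hXY.trans (sup_le ((Subgroup.le_centralizer_iff.1 hYC).trans
      (Subgroup.centralizer_le_normalizer _)) Subgroup.le_normalizer)
  refine ⟨Y, normal_of_coprime_card_relIndex hYX hnorm ?_, hpY.symm, n + k, ?_⟩
  · rw [hindex, hn]
    exact (hpY.pow_left n).symm
  · rw [← Subgroup.relIndex_mul_index hYX, hindex, hn, hX, pow_add]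

lemma isPNilpotent_of_usQuasinormal [Finite G] (hp : p.Prime)
    (hcop : (Nat.card G).Coprime (p - 1)) {H : Subgroup G} [H.Normal] [Group.IsSolvable H]
    (hGH : IsPNilpotent p (G ⧸ H))
    (hus : ∀ q : ℕ, q.Prime → ∀ Q : Subgroup G, IsSylowIn q Q (FittingIn H) →
      ∀ M : Subgroup G, IsMaximalIn M Q → UsQuasinormal M) : IsPNilpotent p G := by
  have := normal_fittingIn (H := H)
  have := isNilpotent_fittingIn (H := H)
  have hprime {q Q N} (hq : q.Prime) (hQ : IsSylowIn q Q (FittingIn H))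
      (hN : IsChiefFactor Q N) : N.relIndex Q = q :=
    hN.relIndex_eq_of_usQuasinormal hq hQ.2.1 (hus q hq Q hQ)
  have hcomm : commutator G ⊓ H ≤ FittingIn H := by
    refine commutator_inf_le_fittingIn fun q Q N hq hQ hN => ?_
    have := hN.1
    have := hN.2.1
    exact commutator_commutator_le_of_relIndex_eq_prime hq (hprime hq hQ hN)
  have hab : IsPNilpotent p (G ⧸ commutator G) :=
    isPNilpotent_of_isMulCommutative (G := Abelianization G) hp
  obtain ⟨X, _, hFX, hX, k, hk⟩ := (isPNilpotent_quotient_iff hp).1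
    (isPNilpotent_quotient_of_inf_le hp hab hGH hcomm)
  obtain ⟨P, hP⟩ := exists_isSylowIn hp (FittingIn H)
  have := hP.normal_of_isNilpotent hp
  refine isPNilpotent_of_forall_isChiefFactor hp (hP.trans hp hFX hX) hk fun N hN => ?_
  have := hN.2.1
  exact (Subgroup.commutator_mono le_top le_rfl).trans
    (top_commutator_le_of_relIndex_eq_prime hp (hprime hp hP hN) hcop)

end PNilpotent

/-- If `p ∣ |G|` and `gcd(|G|, p-1) = 1`, then `G` is `p`-nilpotent iff
`G` has a soluble normal subgroup `H` such that `G/H` is `p`-nilpotent and every maximal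
subgroup of every Sylow subgroup of `F(H)` is 𝔘ₛ-quasinormal in `G`. -/
theorem stmt_7 {G : Type*} [Group G] [Finite G] (p : ℕ) (hp : p.Prime)
    (hpdvd : p ∣ Nat.card G) (hcop : Nat.Coprime (Nat.card G) (p - 1)) :
    IsPNilpotent p G ↔
      ∃ H : Subgroup G, ∃ _ : H.Normal, IsSolvable H ∧ IsPNilpotent p (G ⧸ H) ∧
        ∀ q : ℕ, q.Prime → ∀ Q : Subgroup G, IsSylowIn q Q (FittingIn H) →
          ∀ M : Subgroup G, IsMaximalIn M Q → UsQuasinormal M := by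
  constructor
  · intro hG
    refine ⟨⊥, inferInstance, inferInstanceAs (Group.IsSolvable (⊥ : Subgroup G)),
      hG.of_surjective hp (QuotientGroup.mk'_surjective ⊥), fun q _ Q hQ M hM => ?_⟩
    exact absurd (hM.1.trans_le (hQ.1.trans fittingIn_le)) not_lt_bot
  · rintro ⟨H, _, hH, hGH, hus⟩
    have : Group.IsSolvable H := hH
    exact isPNilpotent_of_usQuasinormal hp hcop hGH hus
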